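/- The implicational form of modus ponens, p → ((p → q) → q), for distinct atoms p and q, is not N-valid. -/

import Mathlib

/-! ## Dialogical logic: formulas, statements, moves -/

/-- Propositional formulas, built from atoms (indexed by `ℕ`) and `¬`, `∧`, `∨`, `→`. -/
inductive Formula : Type
  | atom : ℕ → Formula
  | neg : Formula → Formula
  | conj : Formula → Formula → Formula
  | disj : Formula → Formula → Formula
  | impl : Formula → Formula → Formula
  deriving DecidableEq, Inhabited

/-- Statements: formulas together with the three symbolic attacks `∧_L`, `∧_R` and `?`. -/
inductive Statement : Type
  | form : Formula → Statement
  | conjL : Statement  -- the symbolic attack ∧_L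
  | conjR : Statement  -- the symbolic attack ∧_R
  | question : Statement   -- the symbolic attack ?
  deriving DecidableEq, Inhabited

/-- A formula is atomic iff it is an atom. -/
def Formula.isAtomic : Formula → Prop
  | .atom _ => True
  | _ => False

/-- A move of a dialogue: a statement together with a reference.  The reference is
`none` for the initial move, `some (m, true)` for an attack on the assertion made at
move `m`, and `some (m, false)` for a defense against the attack made at move `m`. -/
structure Move : Type where
  stmt : Statement
  ref : Option (ℕ × Bool)
  deriving DecidableEq, Inhabited

/-! ## Particle rules -/

/-- Particle rules, attacks: `Attacks a φ` holds when the statement `a` is an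
admissible attack against the assertion `φ`. -/
inductive Attacks : Statement → Formula → Prop
  | conjL (φ ψ : Formula) : Attacks .conjL (.conj φ ψ)
  | conjR (φ ψ : Formula) : Attacks .conjR (.conj φ ψ)
  | disj (φ ψ : Formula) : Attacks .question (.disj φ ψ)
  | impl (φ ψ : Formula) : Attacks (.form φ) (.impl φ ψ)
  | neg (φ : Formula) : Attacks (.form φ) (.neg φ)

/-- Particle rules, defenses: `Defends s a φ` holds when the statement `s` is an
admissible defense of the assertion `φ` against the attack `a`.  (A negation admits
no defense.) -/
inductive Defends : Statement → Statement → Formula → Prop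
  | conjL (φ ψ : Formula) : Defends (.form φ) .conjL (.conj φ ψ)
  | conjR (φ ψ : Formula) : Defends (.form ψ) .conjR (.conj φ ψ)
  | disjL (φ ψ : Formula) : Defends (.form φ) .question (.disj φ ψ)
  | disjR (φ ψ : Formula) : Defends (.form ψ) .question (.disj φ ψ)
  | impl (φ ψ : Formula) : Defends (.form ψ) (.form φ) (.impl φ ψ)

/-! ## Dialogues

A (finite stage of a) dialogue is modelled as a list of moves; the move at index `i`
is the `i`-th move, made by Proponent P if `i` is even and by Opponent O if `i` is odd. -/

/-- The skeletal dialogue conditions: move 0 is an assertion of a formula with no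
reference, and every later move is an attack on, or a defense against, a specified
earlier move of the other player, in accordance with the particle rules; only
non-atomic assertions may be attacked. -/
def IsDialogue (d : List Move) : Prop :=
  (∀ _ : 0 < d.length, d[0]!.ref = none ∧ ∃ φ : Formula, d[0]!.stmt = .form φ) ∧
  (∀ i : ℕ, 0 < i → i < d.length →
    ∃ (m : ℕ) (z : Bool), d[i]!.ref = some (m, z) ∧ m < i ∧ m % 2 ≠ i % 2 ∧
      (z = true →
        ∃ φ : Formula, d[m]!.stmt = .form φ ∧ ¬ φ.isAtomic ∧ Attacks d[i]!.stmt φ) ∧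
      (z = false →
        ∃ (k : ℕ) (φ : Formula), d[m]!.ref = some (k, true) ∧ k < m ∧
          d[k]!.stmt = .form φ ∧ Defends d[i]!.stmt d[m]!.stmt φ))

/-- Rule D10: P may assert an atomic formula only if O has asserted it earlier. -/
def RuleD10 (d : List Move) : Prop :=
  ∀ i < d.length, i % 2 = 0 → ∀ a : ℕ, d[i]!.stmt = .form (.atom a) →
    ∃ j < i, j % 2 = 1 ∧ d[j]!.stmt = .form (.atom a)

/-- Rule D13: each P-assertion may be attacked at most once. -/
def RuleD13 (d : List Move) : Prop :=
  ∀ m : ℕ, m % 2 = 0 → ∀ i < d.length, ∀ j < d.length,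
    d[i]!.ref = some (m, true) → d[j]!.ref = some (m, true) → i = j

/-- Rule E: O may only react (attack or defend) against the immediately preceding
P-move. -/
def RuleE (d : List Move) : Prop :=
  ∀ i < d.length, i % 2 = 1 → ∃ z : Bool, d[i]!.ref = some (i - 1, z)

/-- The rule set N = {D10, D13}. -/
def NRules (d : List Move) : Prop := RuleD10 d ∧ RuleD13 d

/-- The rule set CL = {D10, D13, E}. -/
def CLRules (d : List Move) : Prop := RuleD10 d ∧ RuleD13 d ∧ RuleE d

/-- A dialogue commences with `φ` when its initial move is P's assertion of `φ`. -/
def CommencesWith (φ : Formula) (d : List Move) : Prop :=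
  0 < d.length ∧ d[0]!.stmt = .form φ

/-- An `S`-dialogue for `φ` (for a rule set `S`): a dialogue commencing with `φ`
that obeys the structural rules `S`.  These are exactly the branches (identified
with their underlying move sequences) of the `S`-dialogue tree for `φ`. -/
def SDialogueFor (S : List Move → Prop) (φ : Formula) (d : List Move) : Prop :=
  IsDialogue d ∧ S d ∧ CommencesWith φ d

/-- P wins a finite `S`-dialogue for `φ`: it ends with a P-move (the last index,
`d.length - 1`, is even, i.e. `d.length` is odd) and it cannot be extended by any
legal further (O-)move. -/
def WinsFor (S : List Move → Prop) (φ : Formula) (d : List Move) : Prop :=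
  SDialogueFor S φ d ∧ d.length % 2 = 1 ∧ ∀ m : Move, ¬ SDialogueFor S φ (d ++ [m])

/-- An `S`-winning strategy for P for `φ`, modelled as a set `T` of `S`-dialogues for
`φ`: the nodes of a rooted subtree of the `S`-dialogue tree for `φ`, each node being
identified with the dialogue leading from the root to it.  The conditions state that
`T` is a nonempty, prefix-closed set of `S`-dialogues for `φ` (hence a rooted subtree
of the `S`-dialogue tree with the same root), that every branch of `T` is a finite
`S`-dialogue won by P (leaves are wins for P, and there is no infinite branch), that
every node at odd depth (an O-move) has exactly one child, and that every node at
even depth (a P-move) has the same children in `T` as in the full dialogue tree. -/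
structure IsWinningStrategy (S : List Move → Prop) (φ : Formula) (T : Set (List Move)) : Prop where
  nonempty : T.Nonempty
  dialogues : ∀ d ∈ T, SDialogueFor S φ d
  prefix_closed : ∀ d ∈ T, ∀ e : List Move, e <+: d → 0 < e.length → e ∈ T
  leaf_wins : ∀ d ∈ T, (∀ m : Move, d ++ [m] ∉ T) → WinsFor S φ d
  no_infinite_branch : ∀ f : ℕ → Move, ∃ n : ℕ, 0 < n ∧ (List.ofFn fun i : Fin n => f i) ∉ T
  odd_unique_child : ∀ d ∈ T, 0 < d.length → d.length % 2 = 0 → ∃! m : Move, d ++ [m] ∈ T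
  even_all_children : ∀ d ∈ T, d.length % 2 = 1 →
    ∀ m : Move, SDialogueFor S φ (d ++ [m]) → d ++ [m] ∈ T

/-- `φ` is `S`-valid iff P has an `S`-winning strategy for `φ`. -/
def SValid (S : List Move → Prop) (φ : Formula) : Prop :=
  ∃ T : Set (List Move), IsWinningStrategy S φ T

/-- `φ` is N-valid (`⊨_N φ`) iff P has an N-winning strategy for `φ`. -/
def NValid (φ : Formula) : Prop := SValid NRules φ

/-!
Neither rule of `N` forbids O to repeat a defense. Hence, once P has attacked an assertion that
admits a defense, O can repeat that defense forever, so a winning strategy attacks nothing but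
negations. If no `αᵢ` is a negation, P is therefore left with defending
`α₁ → (α₂ → ⋯ → (αₙ → q))` while O attacks P's last assertion each time: P only ever asserts
tails of the chain, never reaching `q`, which O has not asserted, and so the play is infinite.
For modus ponens, `α₁ = p` and `α₂ = p → q`.
-/

section Concat

variable {α : Type*} [Inhabited α]

theorem getElem!_eq_of_prefix {d e : List α} (h : d <+: e) {i : ℕ} (hi : i < d.length) :
    e[i]! = d[i]! := by
  obtain ⟨t, rfl⟩ := h
  simp [List.getElem!_eq_getElem?_getD, List.getElem?_append_left hi]

theorem getElem!_concat_of_lt (d : List α) (a : α) {i : ℕ} (hi : i < d.length) :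
    (d ++ [a])[i]! = d[i]! :=
  getElem!_eq_of_prefix (List.prefix_append d [a]) hi

theorem getElem!_concat_length (d : List α) (a : α) : (d ++ [a])[d.length]! = a := by
  simp

theorem forall_lt_length_concat_iff {P : ℕ → α → Prop} (d : List α) (a : α) :
    (∀ i < (d ++ [a]).length, P i (d ++ [a])[i]!) ↔ (∀ i < d.length, P i d[i]!) ∧ P d.length a := by
  rw [List.length_append, List.length_singleton, Nat.forall_lt_succ_right, getElem!_concat_length]
  exact and_congr_left' <| forall₂_congr fun i hi => by rw [getElem!_concat_of_lt d a hi]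

end Concat

theorem Attacks.not_isAtomic {s : Statement} {φ : Formula} (h : Attacks s φ) : ¬ φ.isAtomic := by
  cases h <;> exact id

theorem Attacks.exists_defends_or_eq_neg {s : Statement} {φ : Formula} (h : Attacks s φ) :
    (∃ t, Defends t s φ) ∨ ∃ ψ, φ = .neg ψ := by
  cases h with
  | conjL φ ψ => exact .inl ⟨_, .conjL φ ψ⟩
  | conjR φ ψ => exact .inl ⟨_, .conjR φ ψ⟩
  | disj φ ψ => exact .inl ⟨_, .disjL φ ψ⟩
  | impl φ ψ => exact .inl ⟨_, .impl φ ψ⟩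
  | neg φ => exact .inr ⟨φ, rfl⟩

/-- The moves that the particle rules allow after the moves of `d`, whichever structural rules are
in force. -/
inductive IsReply (d : List Move) : Move → Prop
  | attack {s : Statement} {m : ℕ} {φ : Formula} (hm : m < d.length)
      (hpar : m % 2 ≠ d.length % 2) (hφ : d[m]!.stmt = .form φ) (hs : Attacks s φ) :
      IsReply d ⟨s, some (m, true)⟩
  | defense {s : Statement} {m k : ℕ} {φ : Formula} (hm : m < d.length)
      (hpar : m % 2 ≠ d.length % 2) (href : d[m]!.ref = some (k, true)) (hk : k < m)
      (hφ : d[k]!.stmt = .form φ) (hs : Defends s d[m]!.stmt φ) :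
      IsReply d ⟨s, some (m, false)⟩

theorem IsDialogue.ref_lt_and_parity {d : List Move} (h : IsDialogue d) {i m : ℕ} {z : Bool}
    (hi : i < d.length) (href : d[i]!.ref = some (m, z)) : m < i ∧ m % 2 ≠ i % 2 := by
  have hpos : 0 < i := Nat.pos_of_ne_zero <| by
    rintro rfl
    rw [(h.1 hi).1] at href
    cases href
  obtain ⟨m', z', href', hlt, hpar, -⟩ := h.2 i hpos hi
  simp_all

theorem IsDialogue.isReply_of_concat {d : List Move} {a : Move} (hd : 0 < d.length)
    (h : IsDialogue (d ++ [a])) : IsReply d a := by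
  obtain ⟨s, r⟩ := a
  obtain ⟨m, z, href, hm, hpar, hatt, hdef⟩ := h.2 d.length hd (by simp)
  simp only [getElem!_concat_length, getElem!_concat_of_lt d _ hm] at href hatt hdef
  subst href
  cases z with
  | true =>
    obtain ⟨φ, hφ, -, hs⟩ := hatt rfl
    exact .attack hm hpar hφ hs
  | false =>
    obtain ⟨k, φ, href, hk, hφ, hs⟩ := hdef rfl
    rw [getElem!_concat_of_lt d _ (hk.trans hm)] at hφ
    exact .defense hm hpar href hk hφ hs

theorem IsDialogue.concat {d : List Move} {a : Move} (hd : 0 < d.length) (h : IsDialogue d)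
    (ha : IsReply d a) : IsDialogue (d ++ [a]) := by
  refine ⟨fun _ => by simpa only [getElem!_concat_of_lt d a hd] using h.1 hd, fun i hpos hi => ?_⟩
  rw [List.length_append, List.length_singleton, Nat.lt_succ_iff_lt_or_eq] at hi
  rcases hi with hi | rfl
  · obtain ⟨m, z, href, hm, hpar, hatt, hdef⟩ := h.2 i hpos hi
    simp only [getElem!_concat_of_lt d a hi]
    refine ⟨m, z, href, hm, hpar, ?_⟩
    simp only [getElem!_concat_of_lt d a (hm.trans hi)]
    refine ⟨hatt, fun hz => ?_⟩
    obtain ⟨k, φ, href, hk, hφ, hs⟩ := hdef hz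
    exact ⟨k, φ, href, hk, by rwa [getElem!_concat_of_lt d a (hk.trans (hm.trans hi))], hs⟩
  · rw [getElem!_concat_length]
    cases ha with
    | attack hm hpar hφ hs =>
      refine ⟨_, _, rfl, hm, hpar, fun _ => ⟨_, ?_, hs.not_isAtomic, hs⟩, by simp⟩
      rwa [getElem!_concat_of_lt d _ hm]
    | defense hm hpar href hk hφ hs =>
      refine ⟨_, _, rfl, hm, hpar, by simp, fun _ => ?_⟩
      rw [getElem!_concat_of_lt d _ hm]
      exact ⟨_, _, href, hk, by rwa [getElem!_concat_of_lt d _ (hk.trans hm)], hs⟩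

theorem ruleD10_concat_iff {d : List Move} {a : Move} :
    RuleD10 (d ++ [a]) ↔ RuleD10 d ∧ (d.length % 2 = 0 → ∀ x : ℕ, a.stmt = .form (.atom x) →
      ∃ j < d.length, j % 2 = 1 ∧ d[j]!.stmt = .form (.atom x)) := by
  have hbefore : ∀ i ≤ d.length, ∀ x : ℕ,
      (∃ j < i, j % 2 = 1 ∧ (d ++ [a])[j]!.stmt = .form (.atom x)) ↔
        ∃ j < i, j % 2 = 1 ∧ d[j]!.stmt = .form (.atom x) := fun i hi x =>
    exists_congr fun j => and_congr_right fun hj => by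
      rw [getElem!_concat_of_lt d a (hj.trans_le hi)]
  unfold RuleD10
  rw [List.length_append, List.length_singleton, Nat.forall_lt_succ_right, getElem!_concat_length]
  simp only [hbefore _ le_rfl]
  refine and_congr_left' <| forall₂_congr fun i hi => ?_
  simp only [hbefore i hi.le, getElem!_concat_of_lt d a hi]

theorem RuleD13.concat {d : List Move} {a : Move} (h : RuleD13 d)
    (ha : ∀ m, m % 2 = 0 → a.ref = some (m, true) → ∀ i < d.length, d[i]!.ref ≠ some (m, true)) :
    RuleD13 (d ++ [a]) := by
  intro m hm i hi j hj hrefi hrefj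
  wlog hij : i ≤ j
  · exact (this h ha m hm j hj i hi hrefj hrefi (le_of_not_ge hij)).symm
  rw [List.length_append, List.length_singleton, Nat.lt_succ_iff] at hj
  rcases hij.eq_or_lt with rfl | hij
  · rfl
  have hid : i < d.length := hij.trans_le hj
  rw [getElem!_concat_of_lt d a hid] at hrefi
  rcases hj.lt_or_eq with hj | rfl
  · rw [getElem!_concat_of_lt d a hj] at hrefj
    exact h m hm i hid j hj hrefi hrefj
  · rw [getElem!_concat_length] at hrefj
    exact absurd hrefi (ha m hm hrefj i hid)

theorem SDialogueFor.concat_of_odd {φ : Formula} {d : List Move} {a : Move}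
    (h : SDialogueFor NRules φ d) (hodd : d.length % 2 = 1) (ha : IsReply d a)
    (hnew : ∀ m, a.ref = some (m, true) → ∀ i < d.length, d[i]!.ref ≠ some (m, true)) :
    SDialogueFor NRules φ (d ++ [a]) := by
  obtain ⟨hdial, ⟨h10, h13⟩, hpos, hφ⟩ := h
  exact ⟨hdial.concat hpos ha,
    ⟨ruleD10_concat_iff.2 ⟨h10, by omega⟩, h13.concat fun m _ => hnew m⟩,
    by simp, by rwa [getElem!_concat_of_lt d a hpos]⟩

section Iterate

variable {α : Type*} (next : List α → α)

theorem length_iterate_concat (d : List α) (n : ℕ) :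
    ((fun e => e ++ [next e])^[n] d).length = d.length + n := by
  induction n with
  | zero => rfl
  | succ n ih => rw [Function.iterate_succ_apply', List.length_append, ih]; rfl

theorem iterate_concat_prefix (d : List α) {m n : ℕ} (h : m ≤ n) :
    (fun e => e ++ [next e])^[m] d <+: (fun e => e ++ [next e])^[n] d := by
  induction n, h using Nat.le_induction with
  | base => exact List.prefix_rfl
  | succ n _ ih =>
    rw [Function.iterate_succ_apply']
    exact ih.trans (List.prefix_append _ _)

end Iterate

namespace IsWinningStrategy

variable {S : List Move → Prop} {φ : Formula} {T : Set (List Move)}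

theorem exists_forall_concat_notMem (hT : IsWinningStrategy S φ T) {U : Set (List Move)}
    (hU : U.Nonempty) (hUT : U ⊆ T) : ∃ d ∈ U, ∀ a, d ++ [a] ∉ U := by
  by_contra! hext
  choose! next hnext using hext
  obtain ⟨d, hd⟩ := hU
  have hpos : 0 < d.length := (hT.dialogues d (hUT hd)).2.2.1
  set g : ℕ → List Move := fun n => (fun e => e ++ [next e])^[n] d
  have hg (n : ℕ) : g n ∈ U := by
    induction n with
    | zero => exact hd
    | succ n ih =>
      simp only [g, Function.iterate_succ_apply']
      exact hnext _ ih
  have hlen (n : ℕ) : n < (g n).length := by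
    rw [length_iterate_concat]
    omega
  obtain ⟨n, hn, hbranch⟩ := hT.no_infinite_branch fun i => (g i)[i]'(hlen i)
  have htake : (List.ofFn fun i : Fin n => (g i)[(i : ℕ)]'(hlen i)) = (g n).take n := by
    refine List.ext_getElem (by simpa using (hlen n).le) fun i hi _ => ?_
    simp only [List.getElem_ofFn, List.getElem_take]
    exact (iterate_concat_prefix next d (by simpa using hi.le)).getElem (hlen i)
  refine hbranch (htake ▸ hT.prefix_closed _ (hUT (hg n)) _ (List.take_prefix _ _) ?_)
  rw [List.length_take_of_le (hlen n).le]
  exact hn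

theorem exists_prefix_winsFor (hT : IsWinningStrategy S φ T) {d : List Move} (hd : d ∈ T) :
    ∃ e, d <+: e ∧ WinsFor S φ e := by
  obtain ⟨e, ⟨heT, hde⟩, hmax⟩ :=
    hT.exists_forall_concat_notMem (U := {e ∈ T | d <+: e}) ⟨d, hd, List.prefix_rfl⟩ fun _ h => h.1
  exact ⟨e, hde, hT.leaf_wins e heT fun a ha => hmax a ⟨ha, hde.trans (List.prefix_append _ _)⟩⟩

theorem exists_singleton_mem (hT : IsWinningStrategy S φ T) :
    ∃ a : Move, a.stmt = .form φ ∧ [a] ∈ T := by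
  obtain ⟨d, hd⟩ := hT.nonempty
  obtain ⟨-, -, hpos, hφ⟩ := hT.dialogues d hd
  obtain ⟨a, d, rfl⟩ := List.exists_cons_of_length_pos hpos
  exact ⟨a, hφ, hT.prefix_closed _ hd _ (List.prefix_append [a] d) Nat.one_pos⟩

theorem exists_eq_neg_of_attack (hT : IsWinningStrategy NRules φ T) {d : List Move} (hd : d ∈ T)
    {i m : ℕ} (hi : i < d.length) (heven : i % 2 = 0) (href : d[i]!.ref = some (m, true)) :
    ∃ ψ, d[m]!.stmt = .form (.neg ψ) := by
  have hdial := (hT.dialogues d hd).1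
  obtain ⟨hm, -⟩ := hdial.ref_lt_and_parity hi href
  obtain ⟨_, _, href', -, -, hatt, -⟩ := hdial.2 i (by omega) hi
  cases href.symm.trans href'
  obtain ⟨χ, hχ, -, hs⟩ := hatt rfl
  rcases hs.exists_defends_or_eq_neg with ⟨t, ht⟩ | ⟨ψ, rfl⟩
  · obtain ⟨e, hde, he, hodd, hstuck⟩ := hT.exists_prefix_winsFor hd
    have hie : e[i]! = d[i]! := getElem!_eq_of_prefix hde hi
    have hme : e[_]! = d[_]! := getElem!_eq_of_prefix hde (hm.trans hi)
    refine absurd (he.concat_of_odd hodd ?_ (by simp)) (hstuck ⟨t, some (i, false)⟩)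
    exact .defense (hi.trans_le hde.length_le) (by omega) (by rw [hie, href]) hm (by rw [hme, hχ])
      (by rwa [hie])
  · exact ⟨ψ, hχ⟩

end IsWinningStrategy

/-- The chain `α₁ → (α₂ → ⋯ → (αₙ → q))` with premises `L = [α₁, …, αₙ]`. -/
def implChain (L : List Formula) (q : ℕ) : Formula :=
  L.foldr .impl (.atom q)

/-- The dialogues in which the chain `implChain L q` is merely unfolded: each assertion of O is one
of the premises `L`, and each assertion of P is a tail of the chain other than the atom `q`. -/
def IsUnfolding (L : List Formula) (q : ℕ) (d : List Move) : Prop :=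
  ∀ i < d.length,
    (i % 2 = 1 → ∃ α ∈ L, d[i]!.stmt = .form α) ∧
    (i % 2 = 0 → ∃ α K, α :: K <:+ L ∧ d[i]!.stmt = .form (.impl α (implChain K q)))

namespace IsUnfolding

variable {L : List Formula} {q : ℕ} {d : List Move}

theorem concat_iff {a : Move} :
    IsUnfolding L q (d ++ [a]) ↔ IsUnfolding L q d ∧
      (d.length % 2 = 1 → ∃ α ∈ L, a.stmt = .form α) ∧
      (d.length % 2 = 0 → ∃ α K, α :: K <:+ L ∧ a.stmt = .form (.impl α (implChain K q))) :=
  forall_lt_length_concat_iff d a (P := fun i (b : Move) =>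
    (i % 2 = 1 → ∃ α ∈ L, b.stmt = .form α) ∧
    (i % 2 = 0 → ∃ α K, α :: K <:+ L ∧ b.stmt = .form (.impl α (implChain K q))))

theorem concat_of_ruleD10 (h : IsUnfolding L q d) (hq : .atom q ∉ L) (heven : d.length % 2 = 0)
    {a : Move} (h10 : RuleD10 (d ++ [a])) {K : List Formula} (hK : K <:+ L)
    (ha : a.stmt = .form (implChain K q)) : IsUnfolding L q (d ++ [a]) := by
  refine concat_iff.2 ⟨h, by omega, fun _ => ?_⟩
  cases K with
  | nil =>
    obtain ⟨j, hj, hjodd, hjq⟩ := (ruleD10_concat_iff.1 h10).2 heven q ha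
    obtain ⟨α, hα, hjα⟩ := (h j hj).1 hjodd
    cases hjq.symm.trans hjα
    exact absurd hα hq
  | cons α K => exact ⟨α, K, hK, ha⟩

theorem exists_concat_of_odd {φ : Formula} (h : IsUnfolding L q d)
    (hd : SDialogueFor NRules φ d) (hodd : d.length % 2 = 1) :
    ∃ a, SDialogueFor NRules φ (d ++ [a]) ∧ IsUnfolding L q (d ++ [a]) := by
  obtain ⟨α, K, hK, hlast⟩ := (h (d.length - 1) (by omega)).2 (by omega)
  refine ⟨⟨.form α, some (d.length - 1, true)⟩, hd.concat_of_odd hodd ?_ ?_,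
    concat_iff.2 ⟨h, fun _ => ⟨α, hK.mem List.mem_cons_self, rfl⟩, by omega⟩⟩
  · exact .attack (by omega) (by omega) hlast (.impl _ _)
  · rintro m hm i hi href
    obtain rfl : d.length - 1 = m := by simpa using hm
    have := (hd.1.ref_lt_and_parity hi href).1
    omega

theorem concat_of_mem {φ : Formula} {T : Set (List Move)} (hT : IsWinningStrategy NRules φ T)
    (hneg : ∀ ψ, .neg ψ ∉ L) (hq : .atom q ∉ L) (h : IsUnfolding L q d) (hpos : 0 < d.length)
    (heven : d.length % 2 = 0) {a : Move} (ha : d ++ [a] ∈ T) : IsUnfolding L q (d ++ [a]) := by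
  obtain ⟨hdial, ⟨h10, -⟩, -⟩ := hT.dialogues _ ha
  cases hdial.isReply_of_concat hpos with
  | @attack s m _ hm hpar _ _ =>
    obtain ⟨ψ, hψ⟩ := hT.exists_eq_neg_of_attack ha (i := d.length) (m := m) (by simp) heven
      (by rw [getElem!_concat_length])
    obtain ⟨α, hα, hmα⟩ := (h m hm).1 (by omega)
    rw [getElem!_concat_of_lt d _ hm, hmα] at hψ
    cases hψ
    exact absurd hα (hneg ψ)
  | @defense s m k χ hm hpar href hk hχ hs =>
    have hkpar := (hdial.ref_lt_and_parity (hm.trans (by simp))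
      (by rwa [getElem!_concat_of_lt d _ hm])).2
    obtain ⟨α, K, hK, hkα⟩ := (h k (hk.trans hm)).2 (by omega)
    cases hχ.symm.trans hkα
    refine h.concat_of_ruleD10 hq heven h10 ((List.suffix_cons α K).trans hK) ?_
    generalize d[m]!.stmt = t at hs
    cases hs
    rfl

end IsUnfolding

theorem implicational_modus_ponens_not_N_valid_general {L : List Formula} {q : ℕ}
    (hneg : ∀ ψ, .neg ψ ∉ L) (hq : .atom q ∉ L) : ¬ NValid (implChain L q) := by
  rintro ⟨T, hT⟩
  obtain ⟨a, ha, haT⟩ := hT.exists_singleton_mem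
  have hstart : IsUnfolding L q [a] :=
    IsUnfolding.concat_of_ruleD10 (d := []) (by simp [IsUnfolding]) hq rfl
      (hT.dialogues _ haT).2.1.1 List.suffix_rfl ha
  obtain ⟨d, ⟨hdT, hd⟩, hmax⟩ := hT.exists_forall_concat_notMem
    (U := {d ∈ T | IsUnfolding L q d}) ⟨[a], haT, hstart⟩ fun _ h => h.1
  have hdial := hT.dialogues d hdT
  rcases Nat.mod_two_eq_zero_or_one d.length with heven | hodd
  · obtain ⟨b, hbT, -⟩ := hT.odd_unique_child d hdT hdial.2.2.1 heven
    exact hmax b ⟨hbT, hd.concat_of_mem hT hneg hq hdial.2.2.1 heven hbT⟩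
  · obtain ⟨b, hb, hbU⟩ := hd.exists_concat_of_odd hdial hodd
    exact hmax b ⟨hT.even_all_children d hdT hodd b hb, hbU⟩

/-- The implicational form of modus ponens `p → ((p → q) → q)`,
for distinct atoms `p` and `q`, is not N-valid. -/
theorem implicational_modus_ponens_not_N_valid (p q : ℕ) (hpq : p ≠ q) :
    ¬ NValid (Formula.impl (Formula.atom p)
        (Formula.impl (Formula.impl (Formula.atom p) (Formula.atom q))
          (Formula.atom q))) := by
  exact implicational_modus_ponens_not_N_valid_general (L := [.atom p, .impl (.atom p) (.atom q)])
    (by simp) (by simpa using hpq.symm)
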